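/- arXiv:1810.05707 — 2 statements merged into one kernel-verified Lean document; each statement's English description precedes it below -/
import Mathlib

section
/- Let 𝓕 be a uniformly Lipschitz family of maps between metric spaces with λ = sup_{F∈𝓕} Lip(F) ∈ (0,∞). If limsup_n a_n(𝓕) > 0, then 𝓕 factors the Hamming cubes, and moreover c(𝓕) = lim_n a_n(𝓕) (this limit exists). -/
/-!
Splitting an antipodal flip into two flips of complementary sets of coordinates and applying the
triangle inequality shows that `n * a_n` is subadditive, so by Fekete's lemma `a_n` converges to
`α = inf a_n`.

Suppose `α > 0`, let `f` be a `C`-Lipschitz map (for the unnormalized Hamming metric) that is nearly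
extremal for `a_N`, and write `ϱ(v)` for the mean displacement `𝔼 d(F f ε, F f (ε + v))`. Group the
coordinates into blocks of size `k`, and the blocks into `q` superblocks of `m` blocks each. If `v`
is a union of blocks, then `ϱ(v) ≤ a_{|v|} C |v|` with `a_{|v|}` close to `α`; the same holds for
the complement of `v`, and the sum of the two is almost attained, so `ϱ(v) ≈ α C |v|`.
This controls the target. For the source, if flipping a superblock displaced `f` by noticeably less
than `C m k` for every superblock, then the map `s ↦ f (ε + s)` on the cube of superblocks would
have so small a Lipschitz constant that its mean antipodal displacement would contradict `a_q ≈ α`.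
Hence some superblock has a nearly maximal displacement in the source, and by the triangle
inequality so do all the unions of its blocks. Distances concentrate around their means by the
Efron–Stein inequality: they fluctuate by `O(√N)`, which is `o(k)` for fixed `q` and `m`. So for a
suitable `ε` the blocks of this superblock span an `m`-cube on which `f` and `F ∘ f` are both nearly
multiples of isometries, with ratio `α`.

Conversely, an embedding of the `n`-cube with distortion `D` and constant `c` is itself a test map
for `a_n`, and gives `c ≤ a_n D²`.
-/

open Finset

noncomputable section

/-- Normalized Hamming distance on the cube `{±1}^n` (modeled as `Fin n → Bool`). -/
def hdist (n : ℕ) (ε δ : Fin n → Bool) : ℝ :=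
  ((Finset.univ.filter fun i => ε i ≠ δ i).card : ℝ) / n

/-- `-ε`: flip all coordinates. -/
def negCube {n : ℕ} (ε : Fin n → Bool) : Fin n → Bool := fun i => !(ε i)

/-- `d_i ε`: flip the `i`-th coordinate. -/
def flipCoord {n : ℕ} (i : Fin n) (ε : Fin n → Bool) : Fin n → Bool :=
  Function.update ε i (!(ε i))

/-- Expectation with respect to the uniform probability measure on the cube. -/
def cubeE (n : ℕ) (Φ : (Fin n → Bool) → ℝ) : ℝ :=
  (∑ ε : Fin n → Bool, Φ ε) / 2 ^ n

/-- Lipschitz constant of a map from the cube (with metric `hdist`) into a metric space,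
with the convention `0 / 0 = 0`. -/
def cubeLip {n : ℕ} {X : Type} [MetricSpace X] (f : (Fin n → Bool) → X) : ℝ :=
  sSup { r : ℝ | ∃ ε δ, r = dist (f ε) (f δ) / hdist n ε δ }

/-- A map between (bundled) metric spaces. -/
structure MetricMap where
  X : Type
  Y : Type
  mX : MetricSpace X
  mY : MetricSpace Y
  F : X → Y

attribute [instance] MetricMap.mX MetricMap.mY

/-- `a_n(𝓕)`: infimum of those `a > 0` such that for each `F : X → Y` in `𝓕` and each
`f : 2^n → X`, `𝔼 ϱ_Y^f(ε,−ε) ≤ a·Lip(f)`. -/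
def aConst (𝓕 : Set MetricMap) (n : ℕ) : ℝ :=
  sInf { a : ℝ | 0 < a ∧ ∀ G ∈ 𝓕, ∀ f : (Fin n → Bool) → G.X,
    cubeE n (fun ε => dist (G.F (f ε)) (G.F (f (negCube ε)))) ≤ a * cubeLip f }

/-- `b_{p,n}(𝓕)`: infimum of those `b > 0` such that for each `F : X → Y` in `𝓕` and each
`f : 2^n → X`, `𝔼 ϱ_Y^f(ε,−ε)^p ≤ b^p n^{p−1} ∑_i 𝔼 ϱ_X^f(ε,d_iε)^p`. -/
def bConst (𝓕 : Set MetricMap) (p : ℝ) (n : ℕ) : ℝ :=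
  sInf { b : ℝ | 0 < b ∧ ∀ G ∈ 𝓕, ∀ f : (Fin n → Bool) → G.X,
    cubeE n (fun ε => dist (G.F (f ε)) (G.F (f (negCube ε))) ^ p)
      ≤ b ^ p * (n : ℝ) ^ (p - 1) *
        ∑ i : Fin n, cubeE n (fun ε => dist (f ε) (f (flipCoord i ε)) ^ p) }

/-- `𝓕` factors the Hamming cubes. -/
def FactorsHammingCubes (𝓕 : Set MetricMap) : Prop :=
  ∃ c : ℝ, 0 < c ∧ ∀ D : ℝ, 1 < D → ∀ n : ℕ, 0 < n →
    ∃ G ∈ 𝓕, ∃ f : (Fin n → Bool) → G.X, ∃ a b : ℝ, 0 < a ∧ 0 < b ∧ a * c ≤ b ∧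
      ∀ ε δ : Fin n → Bool,
        a / D * hdist n ε δ ≤ dist (f ε) (f δ) ∧
        dist (f ε) (f δ) ≤ a * D * hdist n ε δ ∧
        b / D * hdist n ε δ ≤ dist (G.F (f ε)) (G.F (f δ)) ∧
        dist (G.F (f ε)) (G.F (f δ)) ≤ b * D * hdist n ε δ

/-- `c(𝓕)`: the supremum of those `c > 0` witnessing the factorization of the Hamming cubes
(`sSup ∅ = 0` in `ℝ`, matching the convention `c(𝓕) = 0` if no such `c` exists). -/
def cConst (𝓕 : Set MetricMap) : ℝ :=
  sSup { c : ℝ | 0 < c ∧ ∀ D : ℝ, 1 < D → ∀ n : ℕ, 0 < n →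
    ∃ G ∈ 𝓕, ∃ f : (Fin n → Bool) → G.X, ∃ a b : ℝ, 0 < a ∧ 0 < b ∧ a * c ≤ b ∧
      ∀ ε δ : Fin n → Bool,
        a / D * hdist n ε δ ≤ dist (f ε) (f δ) ∧
        dist (f ε) (f δ) ≤ a * D * hdist n ε δ ∧
        b / D * hdist n ε δ ≤ dist (G.F (f ε)) (G.F (f δ)) ∧
        dist (G.F (f ε)) (G.F (f δ)) ≤ b * D * hdist n ε δ }

open Filter Topology
open scoped symmDiff NNReal BigOperators

/-! ### The cube as an elementary abelian 2-group -/

section Cube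

variable {ι κ τ : Type*}

/-- The product `v ⊗ w` of two points of cubes, regarded as indicator vectors of sets of
coordinates: the indicator vector of the product set. -/
def cubeProd (v : κ → Bool) (w : τ → Bool) : κ × τ → Bool := fun i => v i.1 && w i.2

lemma cubeProd_symmDiff_left (v v' : κ → Bool) (w : τ → Bool) :
    cubeProd (v ∆ v') w = cubeProd v w ∆ cubeProd v' w := by
  ext i
  simp [cubeProd, Pi.symmDiff_apply, Bool.symmDiff_eq_xor, Bool.and_xor_distrib_right]

lemma cubeProd_symmDiff_right (v : κ → Bool) (w w' : τ → Bool) :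
    cubeProd v (w ∆ w') = cubeProd v w ∆ cubeProd v w' := by
  ext i
  simp [cubeProd, Pi.symmDiff_apply, Bool.symmDiff_eq_xor, Bool.and_xor_distrib_left]

variable [Fintype ι] [Fintype κ] [Fintype τ]

/-- The Hamming weight of a point of the cube: its number of coordinates equal to `true`. -/
def hammingWeight (v : ι → Bool) : ℕ := #{i | v i}

lemma hammingWeight_top : hammingWeight (⊤ : ι → Bool) = Fintype.card ι := by
  simp [hammingWeight, Finset.card_univ]

lemma hammingWeight_bot : hammingWeight (⊥ : ι → Bool) = 0 := by
  simp [hammingWeight]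

lemma hammingWeight_sumElim (v : κ → Bool) (w : τ → Bool) :
    hammingWeight (Sum.elim v w) = hammingWeight v + hammingWeight w := by
  simp only [hammingWeight, Finset.card_filter, Fintype.sum_sum_type, Sum.elim_inl, Sum.elim_inr]
  rfl

lemma hammingDist_eq_hammingWeight_symmDiff (ε δ : ι → Bool) :
    hammingDist ε δ = hammingWeight (ε ∆ δ) := by
  simp [hammingDist, hammingWeight, Pi.symmDiff_apply, Bool.symmDiff_eq_xor]

lemma hammingDist_symmDiff_right (v ε δ : ι → Bool) :
    hammingDist (ε ∆ v) (δ ∆ v) = hammingDist ε δ := by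
  rw [hammingDist_eq_hammingWeight_symmDiff, hammingDist_eq_hammingWeight_symmDiff,
    symmDiff_symmDiff_symmDiff_comm, symmDiff_self, symmDiff_bot]

lemma hammingDist_symmDiff_left (v ε δ : ι → Bool) :
    hammingDist (v ∆ ε) (v ∆ δ) = hammingDist ε δ := by
  rw [symmDiff_comm v, symmDiff_comm v, hammingDist_symmDiff_right]

lemma hammingDist_self_symmDiff (ε v : ι → Bool) :
    hammingDist ε (ε ∆ v) = hammingWeight v := by
  rw [hammingDist_eq_hammingWeight_symmDiff, symmDiff_symmDiff_cancel_left]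

lemma hammingWeight_sdiff_add_hammingWeight {v u : ι → Bool} (h : v ≤ u) :
    hammingWeight (u \ v) + hammingWeight v = hammingWeight u := by
  simp only [hammingWeight, Finset.card_filter, ← Finset.sum_add_distrib]
  refine Finset.sum_congr rfl fun i _ => ?_
  have hi : v i → u i := Bool.le_iff_imp.1 (h i)
  cases hv : v i <;> simp_all [sdiff_eq]

lemma hammingWeight_cubeProd (v : κ → Bool) (w : τ → Bool) :
    hammingWeight (cubeProd v w) = hammingWeight v * hammingWeight w := by
  simp only [hammingWeight, cubeProd, Bool.and_eq_true, ← Finset.card_product]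
  congr 1
  ext i
  simp

lemma hammingDist_comp_equiv (e : ι ≃ κ) (ε δ : κ → Bool) :
    hammingDist (ε ∘ e) (δ ∘ e) = hammingDist ε δ :=
  Finset.card_equiv e (by simp)

lemma exists_subcube (v : ι → Bool) : ∃ P : (Fin (hammingWeight v) → Bool) → ι → Bool,
    (∀ s t, hammingDist (P s) (P t) = hammingDist s t) ∧ ∀ s, P (s ∆ ⊤) = P s ∆ v := by
  classical
  let e : {i // v i} ≃ Fin (hammingWeight v) :=
    Fintype.equivFinOfCardEq (Fintype.card_subtype _)
  refine ⟨fun s i => if h : v i then s (e ⟨i, h⟩) else false, fun s t => ?_, fun s => ?_⟩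
  · refine (Finset.card_bij (fun j _ => (e.symm j : ι)) ?_ ?_ ?_).symm
    · intro j hj
      simpa [(e.symm j).2] using hj
    · exact fun j _ j' _ h => e.symm.injective (Subtype.ext h)
    · intro i hi
      by_cases h : v i
      · exact ⟨e ⟨i, h⟩, by simpa [h] using hi, by simp⟩
      · simp [h] at hi
  · ext i
    by_cases h : v i <;> simp [h, Pi.symmDiff_apply, Bool.symmDiff_eq_xor]

lemma exists_hammingDist_eq_one {n : ℕ} {ε δ : ι → Bool} (h : hammingDist ε δ = n + 1) :
    ∃ ε', hammingDist ε ε' = 1 ∧ hammingDist ε' δ = n := by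
  classical
  have hpos : 0 < hammingDist ε δ := by omega
  obtain ⟨i, hi⟩ := Finset.card_pos.1 hpos
  rw [Finset.mem_filter_univ] at hi
  refine ⟨Function.update ε i (δ i), ?_, ?_⟩
  · have : ({j | ε j ≠ Function.update ε i (δ i) j} : Finset ι) = {i} := by
      ext j
      by_cases hj : j = i
      · subst hj; simpa using hi
      · simp [hj]
    rw [hammingDist, this, Finset.card_singleton]
  · have : ({j | Function.update ε i (δ i) j ≠ δ j} : Finset ι) =
        ({j | ε j ≠ δ j} : Finset ι).erase i := by
      ext j
      by_cases hj : j = i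
      · subst hj; simp
      · simp [hj]
    rw [hammingDist, this, Finset.card_erase_of_mem (by simpa using hi)]
    exact Nat.sub_eq_of_eq_add h

lemma hammingDist_cons {n : ℕ} (b b' : Bool) (x x' : Fin n → Bool) :
    hammingDist (Fin.cons b x : Fin (n + 1) → Bool) (Fin.cons b' x') =
      (if b ≠ b' then 1 else 0) + hammingDist x x' := by
  simp [hammingDist, Finset.card_filter, Fin.sum_univ_succ]

end Cube

/-! ### Lipschitz maps and mean displacements -/

/-- `f` is `C`-Lipschitz for the unnormalized Hamming metric. -/
def HammingLipschitz {ι Z : Type*} [Fintype ι] [PseudoMetricSpace Z] (C : ℝ)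
    (f : (ι → Bool) → Z) : Prop :=
  ∀ ε δ, dist (f ε) (f δ) ≤ C * hammingDist ε δ

namespace HammingLipschitz

variable {ι κ Y Z : Type*} [Fintype ι] [Fintype κ] [PseudoMetricSpace Y] [PseudoMetricSpace Z]
  {C : ℝ} {f : (ι → Bool) → Z}

lemma mul_card_nonneg (hf : HammingLipschitz C f) : 0 ≤ C * Fintype.card ι := by
  have h := dist_nonneg.trans (hf ⊥ ⊤)
  rwa [hammingDist_eq_hammingWeight_symmDiff, bot_symmDiff, hammingWeight_top] at h

lemma mono {C' : ℝ} (hC : C ≤ C') (hf : HammingLipschitz C f) : HammingLipschitz C' f :=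
  fun ε δ => (hf ε δ).trans (by gcongr)

lemma postcomp {L : ℝ≥0} {F : Z → Y} (hF : LipschitzWith L F) (hf : HammingLipschitz C f) :
    HammingLipschitz (L * C) (F ∘ f) := fun ε δ =>
  calc dist (F (f ε)) (F (f δ)) ≤ L * dist (f ε) (f δ) := hF.dist_le_mul _ _
    _ ≤ L * (C * hammingDist ε δ) := by gcongr; exact hf ε δ
    _ = L * C * hammingDist ε δ := by ring

lemma precomp {P : (κ → Bool) → ι → Bool} (hf : HammingLipschitz C f)
    (hP : ∀ s t, hammingDist (P s) (P t) = hammingDist s t) : HammingLipschitz C (f ∘ P) :=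
  fun s t => (hf _ _).trans_eq (by rw [hP])

/-- The Hamming metric is a path metric. -/
lemma of_edges {K : ℝ} (h : ∀ ε δ, hammingDist ε δ = 1 → dist (f ε) (f δ) ≤ K) :
    HammingLipschitz K f := by
  suffices H : ∀ n : ℕ, ∀ ε δ, hammingDist ε δ = n → dist (f ε) (f δ) ≤ K * n from
    fun ε δ => H _ ε δ rfl
  intro n
  induction n with
  | zero =>
    intro ε δ h0
    simp [hammingDist_eq_zero.1 h0]
  | succ n ih =>
    intro ε δ hn
    obtain ⟨ε', hεε', hε'δ⟩ := exists_hammingDist_eq_one hn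
    calc dist (f ε) (f δ) ≤ dist (f ε) (f ε') + dist (f ε') (f δ) := dist_triangle _ _ _
      _ ≤ K + K * n := add_le_add (h _ _ hεε') (ih _ _ hε'δ)
      _ = K * (n + 1 : ℕ) := by push_cast; ring

lemma dist_translates (hf : HammingLipschitz C f) (v w : ι → Bool) :
    HammingLipschitz (2 * C) fun ε => dist (f (ε ∆ v)) (f (ε ∆ w)) := fun ε δ =>
  calc dist (dist (f (ε ∆ v)) (f (ε ∆ w))) (dist (f (δ ∆ v)) (f (δ ∆ w)))
      ≤ dist (f (ε ∆ v)) (f (δ ∆ v)) + dist (f (ε ∆ w)) (f (δ ∆ w)) := dist_dist_dist_le _ _ _ _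
    _ ≤ C * hammingDist (ε ∆ v) (δ ∆ v) + C * hammingDist (ε ∆ w) (δ ∆ w) :=
      add_le_add (hf _ _) (hf _ _)
    _ = 2 * C * hammingDist ε δ := by
      rw [hammingDist_symmDiff_right, hammingDist_symmDiff_right]; ring

end HammingLipschitz

section MeanDisplacement

variable {ι κ Z : Type*} [Fintype ι] [DecidableEq ι] [Fintype κ] [DecidableEq κ]
  [PseudoMetricSpace Z]

lemma expect_symmDiff_right {M : Type*} [AddCommMonoid M] [Module ℚ≥0 M] (v : ι → Bool)
    (Φ : (ι → Bool) → M) : 𝔼 ε, Φ (ε ∆ v) = 𝔼 ε, Φ ε :=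
  Fintype.expect_equiv (Function.Involutive.toPerm _ (symmDiff_left_involutive v)) _ _
    fun _ => rfl

/-- The mean displacement `𝔼 d(f(ε), f(ε + v))` of `f` under translation by `v`; the average
antipodal distance is its value at `v = ⊤`. -/
def meanDisplacement (f : (ι → Bool) → Z) (v : ι → Bool) : ℝ := 𝔼 ε, dist (f ε) (f (ε ∆ v))

lemma meanDisplacement_le {f : (ι → Bool) → Z} {C : ℝ} (hf : HammingLipschitz C f)
    (v : ι → Bool) : meanDisplacement f v ≤ C * hammingWeight v :=
  Finset.expect_le univ_nonempty fun ε _ =>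
    (hf ε (ε ∆ v)).trans_eq (by rw [hammingDist_self_symmDiff])

lemma expect_dist_symmDiff (f : (ι → Bool) → Z) (v w : ι → Bool) :
    𝔼 ε, dist (f (ε ∆ v)) (f (ε ∆ w)) = meanDisplacement f (v ∆ w) := by
  rw [meanDisplacement, ← expect_symmDiff_right v fun ε => dist (f ε) (f (ε ∆ (v ∆ w)))]
  simp only [symmDiff_assoc, symmDiff_symmDiff_cancel_left]

lemma meanDisplacement_symmDiff_le (f : (ι → Bool) → Z) (v w : ι → Bool) :
    meanDisplacement f (v ∆ w) ≤ meanDisplacement f v + meanDisplacement f w := by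
  rw [← expect_dist_symmDiff, meanDisplacement, meanDisplacement, ← Finset.expect_add_distrib]
  exact Finset.expect_le_expect fun ε _ => dist_triangle_left _ _ _

lemma meanDisplacement_eq_expect_subcube (f : (ι → Bool) → Z) {v : ι → Bool}
    {P : (κ → Bool) → ι → Bool} (hP : ∀ s, P (s ∆ ⊤) = P s ∆ v) :
    meanDisplacement f v = 𝔼 ε, meanDisplacement (fun s => f (ε ∆ P s)) ⊤ := by
  simp only [meanDisplacement]
  rw [Finset.expect_comm]
  simp only [hP, expect_dist_symmDiff, symmDiff_symmDiff_cancel_left, Fintype.expect_const]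
  rfl

lemma meanDisplacement_comp_equiv (e : ι ≃ κ) (f : (ι → Bool) → Z) :
    meanDisplacement (fun ε : κ → Bool => f (ε ∘ e)) ⊤ = meanDisplacement f ⊤ :=
  Fintype.expect_equiv (e.symm.arrowCongr (Equiv.refl Bool)) _ _ fun _ => rfl

/-- If the displacement along `u` is nearly maximal, then the triangle inequality for
`u = (u \ v) ∆ v` leaves no room for a deficit along `v`. -/
lemma abs_meanDisplacement_sub_le {f : (ι → Bool) → Z} {u v : ι → Bool} {K e : ℝ} (hvu : v ≤ u)
    (hv : meanDisplacement f v ≤ K * hammingWeight v)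
    (huv : meanDisplacement f (u \ v) ≤ K * hammingWeight (u \ v))
    (hu : K * hammingWeight u - e ≤ meanDisplacement f u) :
    |meanDisplacement f v - K * hammingWeight v| ≤ e := by
  have hsub := meanDisplacement_symmDiff_le f (u \ v) v
  rw [sdiff_symmDiff_eq_sup, sup_eq_left.2 hvu] at hsub
  have hweight : (hammingWeight (u \ v) : ℝ) + hammingWeight v = hammingWeight u := by
    exact_mod_cast hammingWeight_sdiff_add_hammingWeight hvu
  rw [← hweight, mul_add] at hu
  exact abs_le.2 ⟨by linarith, by linarith⟩

end MeanDisplacement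

/-! ### Concentration on the cube -/

section Concentration

lemma expect_cube_succ {n : ℕ} (h : (Fin (n + 1) → Bool) → ℝ) :
    𝔼 ε, h ε = ((𝔼 x, h (Fin.cons false x)) + 𝔼 x, h (Fin.cons true x)) / 2 := by
  have hcons : 𝔼 ε, h ε = 𝔼 p : Bool × (Fin n → Bool), h (Fin.cons p.1 p.2) :=
    (Fintype.expect_equiv (Fin.consEquiv fun _ => Bool) _ _ fun _ => rfl).symm
  rw [hcons, ← Finset.univ_product_univ, Finset.expect_product,
    Fintype.expect_eq_sum_div_card, Fintype.sum_bool, Fintype.card_bool, add_comm, Nat.cast_ofNat]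

lemma expect_sq_sub_sq_expect_le {n : ℕ} {h : (Fin n → Bool) → ℝ} {K : ℝ}
    (hh : HammingLipschitz K h) : 𝔼 ε, h ε ^ 2 - (𝔼 ε, h ε) ^ 2 ≤ n * (K ^ 2 / 4) := by
  induction n with
  | zero => simp
  | succ n ih =>
    have hface (b : Bool) : HammingLipschitz K fun x => h (Fin.cons b x) :=
      hh.precomp fun x x' => by simp [hammingDist_cons]
    have hmeans : |(𝔼 x, h (Fin.cons true x)) - 𝔼 x, h (Fin.cons false x)| ≤ K := by
      rw [← Finset.expect_sub_distrib]
      refine (Finset.abs_expect_le _ _).trans (Finset.expect_le univ_nonempty fun x _ => ?_)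
      simpa [hammingDist_cons, Real.dist_eq] using hh (Fin.cons true x) (Fin.cons false x)
    have hsq := sq_le_sq' (abs_le.1 hmeans).1 (abs_le.1 hmeans).2
    have hfalse := ih (hface false)
    have htrue := ih (hface true)
    rw [expect_cube_succ h, expect_cube_succ fun ε => h ε ^ 2]
    push_cast
    linarith

variable {ι : Type*} [Fintype ι] [DecidableEq ι]

lemma expect_sub_expect_sq_le {h : (ι → Bool) → ℝ} {K : ℝ} (hh : HammingLipschitz K h) :
    𝔼 ε, (h ε - 𝔼 δ, h δ) ^ 2 ≤ Fintype.card ι * (K ^ 2 / 4) := by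
  let e := Fintype.equivFin ι
  have htransfer (Φ : (ι → Bool) → ℝ) : 𝔼 ε, Φ ε = 𝔼 x : Fin (Fintype.card ι) → Bool, Φ (x ∘ e) :=
    (Fintype.expect_equiv (e.symm.arrowCongr (Equiv.refl Bool)) _ _ fun _ => rfl).symm
  have hfin : HammingLipschitz K fun x : Fin (Fintype.card ι) → Bool => h (x ∘ e) :=
    hh.precomp fun x x' => hammingDist_comp_equiv e x x'
  have hexpand : 𝔼 ε, (h ε - 𝔼 δ, h δ) ^ 2 = 𝔼 ε, h ε ^ 2 - (𝔼 ε, h ε) ^ 2 := by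
    have hsq (ε : ι → Bool) : (h ε - 𝔼 δ, h δ) ^ 2 =
        h ε ^ 2 - 2 * (𝔼 δ, h δ) * h ε + (𝔼 δ, h δ) ^ 2 := by ring
    simp only [hsq, Finset.expect_add_distrib, Finset.expect_sub_distrib, ← Finset.mul_expect,
      Fintype.expect_const]
    ring
  rw [hexpand, htransfer, htransfer h]
  exact expect_sq_sub_sq_expect_le hfin

lemma exists_forall_abs_sub_expect_le {J : Type*} [Fintype J] {h : J → (ι → Bool) → ℝ}
    {K t : ℝ} (hh : ∀ j, HammingLipschitz K (h j)) (ht : 0 ≤ t)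
    (hlarge : Fintype.card J * (Fintype.card ι * (K ^ 2 / 4)) < t ^ 2) :
    ∃ ε, ∀ j, |h j ε - 𝔼 δ, h j δ| ≤ t := by
  have hmean : 𝔼 ε, ∑ j, (h j ε - 𝔼 δ, h j δ) ^ 2 < t ^ 2 := by
    rw [Finset.expect_sum_comm]
    calc ∑ j, 𝔼 ε, (h j ε - 𝔼 δ, h j δ) ^ 2
        ≤ ∑ _j : J, Fintype.card ι * (K ^ 2 / 4) :=
          Finset.sum_le_sum fun j _ => expect_sub_expect_sq_le (hh j)
      _ < t ^ 2 := by simpa using hlarge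
  obtain ⟨ε, -, hε⟩ := Finset.exists_lt_of_expect_lt univ_nonempty hmean
  refine ⟨ε, fun j => abs_le_of_sq_le_sq ?_ ht⟩
  exact (Finset.single_le_sum (fun i _ => sq_nonneg (h i ε - 𝔼 δ, h i δ)) (mem_univ j)).trans hε.le

/-- On the translate by `ε` of the finite set of points `P a`, all distances between values of `f`
are within `t` of the corresponding mean displacements. -/
def IsTypical {I Z : Type*} [PseudoMetricSpace Z] (f : (ι → Bool) → Z) (P : I → ι → Bool) (t : ℝ)
    (ε : ι → Bool) : Prop :=
  ∀ a b, |dist (f (ε ∆ P a)) (f (ε ∆ P b)) - meanDisplacement f (P a ∆ P b)| ≤ t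

lemma exists_isTypical {I X Y : Type*} [Fintype I] [PseudoMetricSpace X] [PseudoMetricSpace Y]
    {L : ℝ≥0} {F : X → Y} (hF : LipschitzWith L F) {f : (ι → Bool) → X} {C s : ℝ} (hC : 0 < C)
    (hf : HammingLipschitz C f) (P : I → ι → Bool) (hs : 0 ≤ s)
    (hlarge : 2 * Fintype.card I ^ 2 * (Fintype.card ι * (1 + L) ^ 2) < s ^ 2) :
    ∃ ε, IsTypical f P (s * C) ε ∧ IsTypical (F ∘ f) P (s * C) ε := by
  have hf' : HammingLipschitz ((1 + L) * C) f :=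
    hf.mono (le_mul_of_one_le_left hC.le (by simp))
  have hFf' : HammingLipschitz ((1 + L) * C) (F ∘ f) :=
    (hf.postcomp hF).mono (by gcongr; simp)
  have hlarge' : Fintype.card (I × I ⊕ I × I) *
      (Fintype.card ι * ((2 * ((1 + L) * C)) ^ 2 / 4)) < (s * C) ^ 2 := by
    simp only [Fintype.card_sum, Fintype.card_prod, Nat.cast_add, Nat.cast_mul]
    linarith [mul_lt_mul_of_pos_right hlarge (pow_pos hC 2)]
  obtain ⟨ε, hε⟩ := exists_forall_abs_sub_expect_le
    (h := Sum.elim (fun (p : I × I) ε => dist (f (ε ∆ P p.1)) (f (ε ∆ P p.2)))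
      fun (p : I × I) ε => dist ((F ∘ f) (ε ∆ P p.1)) ((F ∘ f) (ε ∆ P p.2)))
    (Sum.rec (fun p => hf'.dist_translates _ _) fun p => hFf'.dist_translates _ _)
    (by positivity) hlarge'
  refine ⟨ε, fun a b => ?_, fun a b => ?_⟩
  · simpa only [Sum.elim_inl, expect_dist_symmDiff] using hε (Sum.inl (a, b))
  · simpa only [Sum.elim_inr, expect_dist_symmDiff] using hε (Sum.inr (a, b))

end Concentration

/-! ### The constants `a_n` -/

section Constants

lemma natCast_mul_hdist {n : ℕ} (ε δ : Fin n → Bool) : n * hdist n ε δ = hammingDist ε δ := by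
  rcases n.eq_zero_or_pos with rfl | hn
  · simp [Subsingleton.elim ε δ]
  · exact mul_div_cancel₀ _ (by positivity)

lemma hdist_nonneg {n : ℕ} (ε δ : Fin n → Bool) : 0 ≤ hdist n ε δ := by
  unfold hdist; positivity

lemma dist_le_cubeLip_mul_hdist {n : ℕ} {X : Type} [MetricSpace X] (f : (Fin n → Bool) → X)
    (ε δ : Fin n → Bool) : dist (f ε) (f δ) ≤ cubeLip f * hdist n ε δ := by
  rcases eq_or_ne ε δ with rfl | hne
  · simp [hdist]
  have hpos : 0 < hdist n ε δ := by
    refine pos_of_mul_pos_right ?_ n.cast_nonneg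
    rw [natCast_mul_hdist]
    exact_mod_cast hammingDist_pos.2 hne
  rw [← div_le_iff₀ hpos]
  refine le_csSup (Set.Finite.bddAbove ?_) ⟨ε, δ, rfl⟩
  refine (Set.finite_range fun p : (Fin n → Bool) × (Fin n → Bool) =>
    dist (f p.1) (f p.2) / hdist n p.1 p.2).subset ?_
  rintro _ ⟨ε, δ, rfl⟩
  exact ⟨(ε, δ), rfl⟩

lemma hammingLipschitz_cubeLip_div {n : ℕ} {X : Type} [MetricSpace X] (f : (Fin n → Bool) → X) :
    HammingLipschitz (cubeLip f / n) f := fun ε δ =>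
  (dist_le_cubeLip_mul_hdist f ε δ).trans_eq (by rw [div_mul_eq_mul_div, mul_div_assoc]; rfl)

lemma HammingLipschitz.cubeLip_le {n : ℕ} {X : Type} [MetricSpace X] {f : (Fin n → Bool) → X}
    {C : ℝ} (hf : HammingLipschitz C f) : cubeLip f ≤ C * n := by
  have hCn : 0 ≤ C * n := by simpa using hf.mul_card_nonneg
  refine Real.sSup_le ?_ hCn
  rintro _ ⟨ε, δ, rfl⟩
  refine div_le_of_le_mul₀ (hdist_nonneg ε δ) hCn ?_
  rw [mul_assoc, natCast_mul_hdist]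
  exact hf ε δ

lemma cubeLip_nonneg {n : ℕ} {X : Type} [MetricSpace X] (f : (Fin n → Bool) → X) :
    0 ≤ cubeLip f := by
  refine Real.sSup_nonneg ?_
  rintro _ ⟨ε, δ, rfl⟩
  exact div_nonneg dist_nonneg (hdist_nonneg ε δ)

lemma cubeE_dist_negCube {n : ℕ} {Z : Type*} [PseudoMetricSpace Z] (f : (Fin n → Bool) → Z) :
    cubeE n (fun ε => dist (f ε) (f (negCube ε))) = meanDisplacement f ⊤ := by
  have hneg (ε : Fin n → Bool) : negCube ε = ε ∆ ⊤ := by rw [symmDiff_top]; rfl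
  simp [cubeE, meanDisplacement, Fintype.expect_eq_sum_div_card, hneg]

lemma aConst_eq_sInf (𝓕 : Set MetricMap) (n : ℕ) :
    aConst 𝓕 n = sInf {a : ℝ | 0 < a ∧ ∀ G ∈ 𝓕, ∀ f : (Fin n → Bool) → G.X,
      meanDisplacement (G.F ∘ f) ⊤ ≤ a * cubeLip f} := by
  simp only [← cubeE_dist_negCube]
  rfl

lemma aConst_nonneg (𝓕 : Set MetricMap) (n : ℕ) : 0 ≤ aConst 𝓕 n :=
  Real.sInf_nonneg fun _ ha => ha.1.le

variable {𝓕 : Set MetricMap} {L : ℝ≥0} {ι : Type*} [Fintype ι] [DecidableEq ι]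

lemma meanDisplacement_le_aConst_mul_cubeLip (hLip : ∀ G ∈ 𝓕, LipschitzWith L G.F) {n : ℕ}
    {G : MetricMap} (hG : G ∈ 𝓕) (f : (Fin n → Bool) → G.X) :
    meanDisplacement (G.F ∘ f) ⊤ ≤ aConst 𝓕 n * cubeLip f := by
  rw [aConst_eq_sInf, mul_comm, ← smul_eq_mul, ← Real.sInf_smul_of_nonneg (cubeLip_nonneg f)]
  refine le_csInf (Set.Nonempty.smul_set ⟨L + 1, by positivity, fun G hG f => ?_⟩) ?_
  · have hn : cubeLip f / n * n ≤ cubeLip f := by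
      rw [div_mul_eq_mul_div, mul_div_assoc]
      exact mul_le_of_le_one_right (cubeLip_nonneg f) (div_self_le_one _)
    calc meanDisplacement (G.F ∘ f) ⊤ ≤ L * (cubeLip f / n) * n := by
          simpa [hammingWeight_top] using
            meanDisplacement_le ((hammingLipschitz_cubeLip_div f).postcomp (hLip G hG)) ⊤
      _ = L * (cubeLip f / n * n) := by ring
      _ ≤ L * cubeLip f := by gcongr
      _ ≤ (L + 1) * cubeLip f := by gcongr; exacts [cubeLip_nonneg f, by simp]
  · rintro _ ⟨a, ⟨-, ha⟩, rfl⟩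
    exact (ha G hG f).trans_eq (mul_comm _ _)

lemma meanDisplacement_le_aConst (hLip : ∀ G ∈ 𝓕, LipschitzWith L G.F) {G : MetricMap}
    (hG : G ∈ 𝓕) {f : (ι → Bool) → G.X} {C : ℝ} (hf : HammingLipschitz C f) (v : ι → Bool) :
    meanDisplacement (G.F ∘ f) v ≤ aConst 𝓕 (hammingWeight v) * (C * hammingWeight v) := by
  obtain ⟨P, hPdist, hPtop⟩ := exists_subcube v
  rw [meanDisplacement_eq_expect_subcube _ hPtop]
  refine Finset.expect_le univ_nonempty fun ε _ => ?_
  have hsub : HammingLipschitz C fun s => f (ε ∆ P s) :=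
    hf.precomp fun s t => by rw [hammingDist_symmDiff_left, hPdist]
  exact (meanDisplacement_le_aConst_mul_cubeLip hLip hG _).trans
    (mul_le_mul_of_nonneg_left hsub.cubeLip_le (aConst_nonneg 𝓕 _))

lemma exists_of_lt_aConst [Nonempty ι] (hLip : ∀ G ∈ 𝓕, LipschitzWith L G.F) {r : ℝ} (hr : 0 < r)
    (hra : r < aConst 𝓕 (Fintype.card ι)) :
    ∃ G ∈ 𝓕, ∃ (f : (ι → Bool) → G.X) (C : ℝ), 0 < C ∧ HammingLipschitz C f ∧
      r * (C * Fintype.card ι) < meanDisplacement (G.F ∘ f) ⊤ := by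
  let e := (Fintype.equivFin ι).symm
  have hnot := notMem_of_lt_csInf (aConst_eq_sInf 𝓕 _ ▸ hra) ⟨0, fun _ ha => ha.1.le⟩
  simp only [Set.mem_ofPred_eq, hr, true_and, not_forall, not_le] at hnot
  obtain ⟨G, hG, f, hlt⟩ := hnot
  have hf : HammingLipschitz (cubeLip f / Fintype.card ι) fun ε => f (ε ∘ e) :=
    (hammingLipschitz_cubeLip_div f).precomp (hammingDist_comp_equiv e)
  rw [← div_mul_cancel₀ (cubeLip f) (Nat.cast_ne_zero.2 (Fintype.card_ne_zero (α := ι))),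
    ← meanDisplacement_comp_equiv e] at hlt
  refine ⟨G, hG, _, _, ?_, hf, hlt⟩
  have hle := meanDisplacement_le_aConst hLip hG hf ⊤
  rw [hammingWeight_top] at hle
  have hpos : 0 < (aConst 𝓕 (Fintype.card ι) - r) *
      (cubeLip f / Fintype.card ι * Fintype.card ι) := by
    rw [sub_mul]
    exact sub_pos.2 (hlt.trans_le hle)
  exact pos_of_mul_pos_left (pos_of_mul_pos_right hpos (sub_pos.2 hra).le) (Nat.cast_nonneg _)

lemma subadditive_natCast_mul_aConst (hLip : ∀ G ∈ 𝓕, LipschitzWith L G.F) :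
    Subadditive fun n : ℕ => n * aConst 𝓕 n := by
  intro m n
  rcases (m + n).eq_zero_or_pos with h0 | hpos
  · simp_all
  have hnonneg : 0 ≤ m * aConst 𝓕 m + n * aConst 𝓕 n :=
    add_nonneg (mul_nonneg m.cast_nonneg (aConst_nonneg _ _))
      (mul_nonneg n.cast_nonneg (aConst_nonneg _ _))
  have hpos' : (0 : ℝ) < (m + n : ℕ) := by exact_mod_cast hpos
  rw [← le_div_iff₀' hpos']
  refine le_of_forall_lt_imp_le_of_dense fun r hr => ?_
  rw [le_div_iff₀ hpos']
  rcases le_or_gt r 0 with hr0 | hr0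
  · exact (mul_nonpos_of_nonpos_of_nonneg hr0 hpos'.le).trans hnonneg
  have : Nonempty (Fin m ⊕ Fin n) := Fintype.card_pos_iff.1 (by simpa using hpos)
  obtain ⟨G, hG, f, C, hC, hf, hlt⟩ := exists_of_lt_aConst (ι := Fin m ⊕ Fin n) hLip hr0
    (by simpa using hr)
  let v : Fin m ⊕ Fin n → Bool := Sum.elim ⊤ ⊥
  let w : Fin m ⊕ Fin n → Bool := Sum.elim ⊥ ⊤
  have hvw : v ∆ w = ⊤ := by ext (i | i) <;> simp [v, w]
  have hv : hammingWeight v = m := by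
    simp [v, hammingWeight_sumElim, hammingWeight_top, hammingWeight_bot]
  have hw : hammingWeight w = n := by
    simp [w, hammingWeight_sumElim, hammingWeight_top, hammingWeight_bot]
  refine le_of_mul_le_mul_left ?_ hC
  calc C * (r * (m + n : ℕ)) = r * (C * Fintype.card (Fin m ⊕ Fin n)) := by
        simp only [Fintype.card_sum, Fintype.card_fin]; ring
    _ ≤ meanDisplacement (G.F ∘ f) (v ∆ w) := hvw ▸ hlt.le
    _ ≤ meanDisplacement (G.F ∘ f) v + meanDisplacement (G.F ∘ f) w :=
      meanDisplacement_symmDiff_le _ _ _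
    _ ≤ aConst 𝓕 m * (C * m) + aConst 𝓕 n * (C * n) := by
      refine add_le_add ?_ ?_
      · simpa only [hv] using meanDisplacement_le_aConst hLip hG hf v
      · simpa only [hw] using meanDisplacement_le_aConst hLip hG hf w
    _ = C * (m * aConst 𝓕 m + n * aConst 𝓕 n) := by ring

lemma exists_tendsto_aConst (hLip : ∀ G ∈ 𝓕, LipschitzWith L G.F) :
    ∃ α, Tendsto (aConst 𝓕) atTop (𝓝 α) ∧ ∀ n ≠ 0, α ≤ aConst 𝓕 n := by
  have hsub := subadditive_natCast_mul_aConst hLip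
  have hbdd : BddBelow (Set.range fun n : ℕ => n * aConst 𝓕 n / n) := by
    refine ⟨0, ?_⟩
    rintro _ ⟨n, rfl⟩
    exact div_nonneg (mul_nonneg n.cast_nonneg (aConst_nonneg 𝓕 n)) n.cast_nonneg
  have hdiv {n : ℕ} (hn : n ≠ 0) : n * aConst 𝓕 n / n = aConst 𝓕 n :=
    mul_div_cancel_left₀ _ (Nat.cast_ne_zero.2 hn)
  refine ⟨hsub.lim, (hsub.tendsto_lim hbdd).congr' ?_,
    fun n hn => (hsub.lim_le_div hbdd hn).trans_eq (hdiv hn)⟩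
  filter_upwards [eventually_ne_atTop 0] with n hn using hdiv hn

end Constants

/-! ### Nearly isometric subcubes -/

section NearExtremal

variable {ι Z : Type*} [Fintype ι] [DecidableEq ι] [PseudoMetricSpace Z]

lemma abs_meanDisplacement_sub_le_of_le_top {g : (ι → Bool) → Z} {v : ι → Bool} {α ξ C : ℝ}
    (hαC : 0 ≤ α * C) (hξ : 0 ≤ ξ)
    (hv : meanDisplacement g v ≤ α * (1 + ξ) * (C * hammingWeight v))
    (hv' : meanDisplacement g (⊤ \ v) ≤ α * (1 + ξ) * (C * hammingWeight (⊤ \ v)))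
    (htop : α * (1 - ξ) * (C * Fintype.card ι) ≤ meanDisplacement g ⊤) :
    |meanDisplacement g v - α * C * hammingWeight v| ≤ 3 * ξ * (α * C * Fintype.card ι) := by
  have hweight : (hammingWeight v : ℝ) ≤ Fintype.card ι := by
    exact_mod_cast Finset.card_le_univ _
  have hslack : ξ * (α * C) * hammingWeight v ≤ ξ * (α * C) * Fintype.card ι := by gcongr
  have hslack₀ : 0 ≤ ξ * (α * C) * hammingWeight v := by positivity
  have hclose := abs_meanDisplacement_sub_le (f := g) (u := ⊤) (v := v) (K := α * (1 + ξ) * C)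
    (e := 2 * ξ * (α * C * Fintype.card ι)) le_top (by linarith) (by linarith)
    (by rw [hammingWeight_top]; linarith)
  rw [abs_le] at hclose ⊢
  constructor <;> linarith

lemma meanDisplacement_le_of_dvd {𝓕 : Set MetricMap} {L : ℝ≥0}
    (hLip : ∀ G ∈ 𝓕, LipschitzWith L G.F) {G : MetricMap} (hG : G ∈ 𝓕) {f : (ι → Bool) → G.X}
    {C β : ℝ} (hC : 0 ≤ C) (hf : HammingLipschitz C f) {k : ℕ} (hβ : ∀ n ≥ k, aConst 𝓕 n ≤ β)
    {v : ι → Bool} (hv : k ∣ hammingWeight v) :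
    meanDisplacement (G.F ∘ f) v ≤ β * (C * hammingWeight v) := by
  have hle := meanDisplacement_le_aConst hLip hG hf v
  rcases (hammingWeight v).eq_zero_or_pos with h0 | hpos
  · simpa [h0] using hle
  · have := hβ _ (Nat.le_of_dvd hpos hv)
    exact hle.trans (by gcongr)

end NearExtremal

section Blocks

variable {κ μ τ : Type*}

/-- Coordinates are indexed by `κ` superblocks, each of `μ` blocks of size `τ`; `blockVector s ω`
selects the blocks `ω` in each of the superblocks `s`. -/
def blockVector (s : κ → Bool) (ω : μ → Bool) : κ × μ × τ → Bool := cubeProd s (cubeProd ω ⊤)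

lemma blockVector_symmDiff_left (s s' : κ → Bool) (ω : μ → Bool) :
    (blockVector s ω ∆ blockVector s' ω : κ × μ × τ → Bool) = blockVector (s ∆ s') ω :=
  (cubeProd_symmDiff_left _ _ _).symm

lemma blockVector_symmDiff_right (s : κ → Bool) (ω ω' : μ → Bool) :
    (blockVector s ω ∆ blockVector s ω' : κ × μ × τ → Bool) = blockVector s (ω ∆ ω') := by
  simp only [blockVector, cubeProd_symmDiff_left, cubeProd_symmDiff_right]

lemma blockVector_top_top : (blockVector ⊤ ⊤ : κ × μ × τ → Bool) = ⊤ := rfl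

lemma blockVector_le_top_right (s : κ → Bool) (ω : μ → Bool) :
    (blockVector s ω : κ × μ × τ → Bool) ≤ blockVector s ⊤ :=
  fun i => inf_le_inf_left (s i.1) (inf_le_inf_right ⊤ le_top)

variable [Fintype κ] [Fintype μ] [Fintype τ]

lemma hammingWeight_blockVector (s : κ → Bool) (ω : μ → Bool) :
    hammingWeight (blockVector s ω : κ × μ × τ → Bool) =
      hammingWeight s * (hammingWeight ω * Fintype.card τ) := by
  rw [blockVector, hammingWeight_cubeProd, hammingWeight_cubeProd, hammingWeight_top]

variable [DecidableEq κ] [DecidableEq μ] [DecidableEq τ] {𝓕 : Set MetricMap} {L : ℝ≥0}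
  {G : MetricMap} {f : (κ × μ × τ → Bool) → G.X} {ε : κ × μ × τ → Bool} {α t : ℝ}

/-- If no superblock were this long, the flips of superblocks would give a map on the cube over
`κ` with a Lipschitz constant contradicting the definition of `a_n`. -/
lemma exists_superblock_le_meanDisplacement (hLip : ∀ G ∈ 𝓕, LipschitzWith L G.F) (hG : G ∈ 𝓕)
    (hf : IsTypical f (fun p : (κ → Bool) × (μ → Bool) => blockVector p.1 p.2) t ε)
    (hFf : IsTypical (G.F ∘ f) (fun p : (κ → Bool) × (μ → Bool) => blockVector p.1 p.2) t ε)
    {ρ : ℝ} (hρ : aConst 𝓕 (Fintype.card κ) * (ρ * Fintype.card κ) <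
      meanDisplacement (G.F ∘ f) ⊤ - t) :
    ∃ w : κ → Bool, hammingWeight w = 1 ∧ ρ - t ≤ meanDisplacement f (blockVector w ⊤) := by
  by_contra! hshort
  let h : (κ → Bool) → G.X := fun s => f (ε ∆ blockVector s ⊤)
  have hh : HammingLipschitz ρ h := by
    refine .of_edges fun s s' hss' => ?_
    rw [hammingDist_eq_hammingWeight_symmDiff] at hss'
    have hdist := (abs_le.1 (hf (s, ⊤) (s', ⊤))).2
    rw [blockVector_symmDiff_left] at hdist
    linarith [hshort _ hss']
  have hupper := meanDisplacement_le_aConst hLip hG hh ⊤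
  rw [hammingWeight_top] at hupper
  have hlower : meanDisplacement (G.F ∘ f) ⊤ - t ≤ meanDisplacement (G.F ∘ h) ⊤ := by
    refine Finset.le_expect univ_nonempty fun s _ => ?_
    have hdist := (abs_le.1 (hFf (s, ⊤) (s ∆ ⊤, ⊤))).1
    rw [blockVector_symmDiff_left, symmDiff_symmDiff_cancel_left, blockVector_top_top] at hdist
    simp only [h, Function.comp_apply] at hdist ⊢
    linarith
  exact (hρ.trans_le hlower).not_ge hupper

variable {C η ξ : ℝ}

lemma abs_meanDisplacement_blockVector_sub_le (hLip : ∀ G ∈ 𝓕, LipschitzWith L G.F) (hG : G ∈ 𝓕)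
    (hf : HammingLipschitz C f) (hC : 0 ≤ C) (hα : 0 ≤ α) (hξ : 0 ≤ ξ)
    (hτ : ∀ n ≥ Fintype.card τ, aConst 𝓕 n ≤ α * (1 + ξ))
    (hextr : α * (1 - ξ) * (C * Fintype.card (κ × μ × τ)) ≤ meanDisplacement (G.F ∘ f) ⊤)
    (s : κ → Bool) (ω : μ → Bool) :
    |meanDisplacement (G.F ∘ f) (blockVector s ω) -
        α * C * hammingWeight (blockVector s ω : κ × μ × τ → Bool)| ≤
      3 * ξ * (α * C * Fintype.card (κ × μ × τ)) := by
  have hdvd : Fintype.card τ ∣ hammingWeight (blockVector s ω : κ × μ × τ → Bool) :=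
    ⟨hammingWeight s * hammingWeight ω, by rw [hammingWeight_blockVector]; ring⟩
  have hdvd_compl : Fintype.card τ ∣ hammingWeight (⊤ \ blockVector s ω : κ × μ × τ → Bool) := by
    refine (Nat.dvd_add_iff_left hdvd).2 ?_
    rw [hammingWeight_sdiff_add_hammingWeight le_top, hammingWeight_top]
    simp [← mul_assoc]
  exact abs_meanDisplacement_sub_le_of_le_top (by positivity) hξ
    (meanDisplacement_le_of_dvd hLip hG hC hf hτ hdvd)
    (meanDisplacement_le_of_dvd hLip hG hC hf hτ hdvd_compl) hextr

lemma abs_meanDisplacement_blockVector_sub_le_of_hammingWeight_eq_one {Z : Type*}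
    [PseudoMetricSpace Z] {g : (κ × μ × τ → Bool) → Z} (hg : HammingLipschitz C g)
    {w : κ → Bool} (hw : hammingWeight w = 1) {e : ℝ}
    (hlong : C * (Fintype.card μ * Fintype.card τ) - e ≤ meanDisplacement g (blockVector w ⊤))
    (ω : μ → Bool) :
    |meanDisplacement g (blockVector w ω) -
      C * hammingWeight (blockVector w ω : κ × μ × τ → Bool)| ≤ e := by
  refine abs_meanDisplacement_sub_le (blockVector_le_top_right w ω) (meanDisplacement_le hg _)
    (meanDisplacement_le hg _) ?_
  simpa [hammingWeight_blockVector, hw, hammingWeight_top] using hlong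

lemma IsTypical.abs_dist_blockVector_sub_le {Z : Type*} [PseudoMetricSpace Z]
    {g : (κ × μ × τ → Bool) → Z} {K e : ℝ}
    (hg : IsTypical g (fun p : (κ → Bool) × (μ → Bool) => blockVector p.1 p.2) t ε)
    {w : κ → Bool} (hw : hammingWeight w = 1)
    (hM : ∀ ω, |meanDisplacement g (blockVector w ω) -
      K * hammingWeight (blockVector w ω : κ × μ × τ → Bool)| ≤ e) (ω ω' : μ → Bool) :
    |dist (g (ε ∆ blockVector w ω)) (g (ε ∆ blockVector w ω')) -
      K * (hammingDist ω ω' * Fintype.card τ)| ≤ t + e := by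
  have hdist := hg (w, ω) (w, ω')
  have hmean := hM (ω ∆ ω')
  rw [blockVector_symmDiff_right] at hdist
  rw [hammingWeight_blockVector, hw, one_mul, ← hammingDist_eq_hammingWeight_symmDiff,
    Nat.cast_mul] at hmean
  exact (abs_sub_le _ _ _).trans (add_le_add hdist hmean)

lemma mul_lt_sub_of_le {a α η ξ U N : ℝ} (hα : 0 < α) (hU : 0 < U) (hη : 0 < η)
    (hη' : η ≤ 1 / 3) (hN : 1 ≤ N) (hξ : ξ * N = η) (ha : a ≤ α * (1 + η)) :
    a * ((1 - 3 * η) * U * N) < α * (1 - ξ) * (N * U) - η * (α * U) := by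
  have hfactor : 0 ≤ (1 - 3 * η) * U * N := by
    have : 0 ≤ 1 - 3 * η := by linarith
    positivity
  calc a * ((1 - 3 * η) * U * N) ≤ α * (1 + η) * ((1 - 3 * η) * U * N) := by gcongr
    _ = α * U * (N * (1 - 2 * η - 3 * η ^ 2)) := by ring
    _ < α * U * (N - 2 * η) := by
      gcongr
      nlinarith
    _ = α * (1 - ξ) * (N * U) - η * (α * U) := by rw [← hξ]; ring

lemma exists_almost_isometric_of_isTypical [Nonempty μ] [Nonempty τ]
    (hLip : ∀ G ∈ 𝓕, LipschitzWith L G.F) (hG : G ∈ 𝓕) (hf : HammingLipschitz C f)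
    (hC : 0 < C) (hα : 0 < α) (hη : 0 < η) (hη' : η ≤ 1 / 3) (hξ : ξ * Fintype.card κ = η)
    (hκ : aConst 𝓕 (Fintype.card κ) ≤ α * (1 + η))
    (hτ : ∀ n ≥ Fintype.card τ, aConst 𝓕 n ≤ α * (1 + ξ))
    (hextr : α * (1 - ξ) * (C * Fintype.card (κ × μ × τ)) ≤ meanDisplacement (G.F ∘ f) ⊤)
    (hε : IsTypical f (fun p : (κ → Bool) × (μ → Bool) => blockVector p.1 p.2) t ε)
    (hFε : IsTypical (G.F ∘ f) (fun p : (κ → Bool) × (μ → Bool) => blockVector p.1 p.2) t ε)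
    (ht : t ≤ η * (C * (Fintype.card μ * Fintype.card τ)))
    (htα : t ≤ η * (α * (C * (Fintype.card μ * Fintype.card τ)))) :
    ∃ g : (μ → Bool) → G.X, ∀ ω ω',
      |dist (g ω) (g ω') - C * (hammingDist ω ω' * Fintype.card τ)| ≤
        5 * η * (C * (Fintype.card μ * Fintype.card τ)) ∧
      |dist (G.F (g ω)) (G.F (g ω')) - α * C * (hammingDist ω ω' * Fintype.card τ)| ≤
        5 * η * (α * (C * (Fintype.card μ * Fintype.card τ))) := by
  set U : ℝ := C * (Fintype.card μ * Fintype.card τ) with hU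
  have hcard : C * Fintype.card (κ × μ × τ) = Fintype.card κ * U := by
    simp only [Fintype.card_prod, Nat.cast_mul, hU]; ring
  have hUpos : 0 < U := by positivity
  have hξpos : 0 < ξ := pos_of_mul_pos_left (hξ ▸ hη) (Nat.cast_nonneg _)
  have hκpos : (1 : ℝ) ≤ Fintype.card κ := by
    exact_mod_cast Nat.cast_pos.1 (pos_of_mul_pos_right (hξ ▸ hη) hξpos.le)
  have hgap : aConst 𝓕 (Fintype.card κ) * ((1 - 3 * η) * U * Fintype.card κ) <
      meanDisplacement (G.F ∘ f) ⊤ - t :=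
    (mul_lt_sub_of_le hα hUpos hη hη' hκpos hξ hκ).trans_le
      (sub_le_sub (by rwa [hcard] at hextr) htα)
  obtain ⟨w, hw, hlong⟩ := exists_superblock_le_meanDisplacement hLip hG hε hFε hgap
  refine ⟨fun ω => f (ε ∆ blockVector w ω), fun ω ω' => ⟨?_, ?_⟩⟩
  · refine (hε.abs_dist_blockVector_sub_le hw
      (abs_meanDisplacement_blockVector_sub_le_of_hammingWeight_eq_one hf hw (e := 4 * η * U)
        (by linarith)) ω ω').trans ?_
    linarith
  · refine (hFε.abs_dist_blockVector_sub_le hw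
      (abs_meanDisplacement_blockVector_sub_le hLip hG hf hC.le hα.le hξpos.le hτ hextr w)
      ω ω').trans ?_
    have : 3 * ξ * (α * C * Fintype.card (κ × μ × τ)) = 3 * η * (α * U) := by
      rw [mul_assoc α, hcard, ← hξ]; ring
    nlinarith [mul_pos hη (mul_pos hα hUpos)]

end Blocks

section Embedding

variable {𝓕 : Set MetricMap} {L : ℝ≥0} {α : ℝ}

lemma exists_block_parameters (L : ℝ≥0) (hα : 0 < α) (hlim : Tendsto (aConst 𝓕) atTop (𝓝 α))
    {m : ℕ} (hm : 0 < m) {η : ℝ} (hη : 0 < η) :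
    ∃ q k : ℕ, 0 < q ∧ 0 < k ∧ aConst 𝓕 q ≤ α * (1 + η) ∧
      (∀ n ≥ k, aConst 𝓕 n ≤ α * (1 + η / q)) ∧
      2 * Fintype.card ((Fin q → Bool) × (Fin m → Bool)) ^ 2 *
        (Fintype.card (Fin q × Fin m × Fin k) * (1 + L) ^ 2) < (η * min 1 α * (m * k)) ^ 2 := by
  have hnear {x : ℝ} (hx : 0 < x) : ∀ᶠ n in atTop, aConst 𝓕 n ≤ α * (1 + x) :=
    hlim.eventually_le_const (lt_mul_of_one_lt_right hα (lt_add_of_pos_right 1 hx))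
  obtain ⟨q, hq, hqpos⟩ := ((hnear hη).and (eventually_gt_atTop 0)).exists
  have hlarge : ∀ᶠ k : ℕ in atTop,
      2 * Fintype.card ((Fin q → Bool) × (Fin m → Bool)) ^ 2 * (q * m * (1 + L) ^ 2) <
        k * (η * min 1 α * m) ^ 2 :=
    (tendsto_natCast_atTop_atTop.atTop_mul_const (by positivity)).eventually_gt_atTop _
  obtain ⟨k, hk, hkpos, hklarge⟩ := ((eventually_forall_ge_atTop.2
    (hnear (by positivity : 0 < η / q))).and ((eventually_gt_atTop 0).and
      hlarge)).exists
  refine ⟨q, k, hqpos, hkpos, hq, hk, ?_⟩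
  simp only [Fintype.card_prod (Fin q), Fintype.card_prod (Fin m), Fintype.card_fin, Nat.cast_mul]
  linarith [mul_lt_mul_of_pos_right hklarge (Nat.cast_pos (α := ℝ).2 hkpos)]

lemma exists_almost_isometric (hLip : ∀ G ∈ 𝓕, LipschitzWith L G.F) (hα : 0 < α)
    (hlim : Tendsto (aConst 𝓕) atTop (𝓝 α)) (hle : ∀ n ≠ 0, α ≤ aConst 𝓕 n) {m : ℕ} (hm : 0 < m)
    {η : ℝ} (hη : 0 < η) (hη' : η ≤ 1 / 3) :
    ∃ G ∈ 𝓕, ∃ (g : (Fin m → Bool) → G.X) (U : ℝ), 0 < U ∧ ∀ ω ω',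
      |dist (g ω) (g ω') - U * hdist m ω ω'| ≤ 5 * η * U ∧
      |dist (G.F (g ω)) (G.F (g ω')) - α * U * hdist m ω ω'| ≤ 5 * η * (α * U) := by
  obtain ⟨q, k, hqpos, hkpos, hq, hk, hlarge⟩ := exists_block_parameters L hα hlim hm hη
  have : Nonempty (Fin q) := ⟨0, hqpos⟩
  have : Nonempty (Fin m) := ⟨0, hm⟩
  have : Nonempty (Fin k) := ⟨0, hkpos⟩
  have hξ : 0 < η / q := by positivity
  have hξ1 : η / q < 1 := by
    rw [div_lt_one (by positivity)]
    linarith [(Nat.one_le_cast (α := ℝ)).2 hqpos]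
  have hlt : α * (1 - η / q) < aConst 𝓕 (Fintype.card (Fin q × Fin m × Fin k)) :=
    (mul_lt_of_lt_one_right hα (by linarith)).trans_le (hle _ Fintype.card_ne_zero)
  obtain ⟨G, hG, f, C, hC, hf, hextr⟩ :=
    exists_of_lt_aConst hLip (mul_pos hα (sub_pos.2 hξ1)) hlt
  set U : ℝ := C * (m * k) with hU
  have hUpos : 0 < U := by positivity
  have ht : η * min 1 α * (m * k) * C = η * (min 1 α * U) := by rw [hU]; ring
  obtain ⟨ε, hε, hFε⟩ := exists_isTypical (hLip G hG) hC hf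
    (fun p : (Fin q → Bool) × (Fin m → Bool) => blockVector p.1 p.2) (by positivity) hlarge
  have htU : η * (min 1 α * U) ≤ η * U :=
    mul_le_mul_of_nonneg_left (mul_le_of_le_one_left hUpos.le (min_le_left _ _)) hη.le
  have htαU : η * (min 1 α * U) ≤ η * (α * U) := by gcongr; exact min_le_right _ _
  obtain ⟨g, hg⟩ := exists_almost_isometric_of_isTypical hLip hG hf hC hα hη hη'
    (by rw [Fintype.card_fin, div_mul_cancel₀ _ (by positivity)]) (by rwa [Fintype.card_fin])
    (by rwa [Fintype.card_fin]) hextr.le hε hFε (by simpa only [Fintype.card_fin, ht] using htU)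
    (by simpa only [Fintype.card_fin, ht] using htαU)
  refine ⟨G, hG, g, U, hUpos, fun ω ω' => ?_⟩
  have hUdist : U * hdist m ω ω' = C * (hammingDist ω ω' * k) := by
    rw [← natCast_mul_hdist, hU]; ring
  simpa [mul_assoc, hUdist] using hg ω ω'

lemma bilipschitz_of_abs_sub_le {n : ℕ} {Z : Type*} [PseudoMetricSpace Z]
    {g : (Fin n → Bool) → Z} {U D : ℝ} (hU : 0 < U) (hD : 1 < D)
    (hg : ∀ ε δ, |dist (g ε) (g δ) - U * hdist n ε δ| ≤ (1 - 1 / D) / n * U) (ε δ : Fin n → Bool) :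
    U / D * hdist n ε δ ≤ dist (g ε) (g δ) ∧ dist (g ε) (g δ) ≤ U * D * hdist n ε δ := by
  rcases eq_or_ne ε δ with rfl | hne
  · simp [hdist]
  have hfar : 1 / (n : ℝ) ≤ hdist n ε δ := by
    unfold hdist
    gcongr
    exact_mod_cast hammingDist_pos.2 hne
  have hD' : 0 ≤ 1 - 1 / D := sub_nonneg.2 (by rw [div_le_one (by linarith)]; exact hD.le)
  have herr : (1 - 1 / D) / n * U ≤ (1 - 1 / D) * hdist n ε δ * U := by
    rw [div_eq_mul_one_div]; gcongr
  have hDD : 2 - 1 / D ≤ D := by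
    have : 0 ≤ (D - 1) ^ 2 / D := by positivity
    field_simp at this ⊢
    linarith
  have hclose := abs_le.1 ((hg ε δ).trans herr)
  have hnonneg : 0 ≤ U * hdist n ε δ := mul_nonneg hU.le (hdist_nonneg _ _)
  constructor
  · linarith [show U / D * hdist n ε δ = 1 / D * hdist n ε δ * U by ring]
  · nlinarith [mul_le_mul_of_nonneg_left hDD hnonneg]

/-- The `n`-cube factors through `𝓕` with distortion `D` and constant `c`: the condition
that `FactorsHammingCubes` and `cConst` impose for each `n` and `D`. -/
def FactorsCube (𝓕 : Set MetricMap) (c D : ℝ) (n : ℕ) : Prop :=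
  ∃ G ∈ 𝓕, ∃ f : (Fin n → Bool) → G.X, ∃ a b : ℝ, 0 < a ∧ 0 < b ∧ a * c ≤ b ∧
    ∀ ε δ : Fin n → Bool,
      a / D * hdist n ε δ ≤ dist (f ε) (f δ) ∧
      dist (f ε) (f δ) ≤ a * D * hdist n ε δ ∧
      b / D * hdist n ε δ ≤ dist (G.F (f ε)) (G.F (f δ)) ∧
      dist (G.F (f ε)) (G.F (f δ)) ≤ b * D * hdist n ε δ

lemma factorsCube_of_tendsto_aConst (hLip : ∀ G ∈ 𝓕, LipschitzWith L G.F) (hα : 0 < α)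
    (hlim : Tendsto (aConst 𝓕) atTop (𝓝 α)) (hle : ∀ n ≠ 0, α ≤ aConst 𝓕 n) {D : ℝ} (hD : 1 < D)
    {n : ℕ} (hn : 0 < n) : FactorsCube 𝓕 α D n := by
  have hDinv : 1 / D < 1 := by rwa [div_lt_one (by linarith)]
  have hDpos : 0 < 1 / D := by positivity
  have hη : 5 * ((1 - 1 / D) / (5 * n)) = (1 - 1 / D) / n := by field_simp
  obtain ⟨G, hG, g, U, hU, hg⟩ := exists_almost_isometric hLip hα hlim hle hn
    (η := (1 - 1 / D) / (5 * n)) (div_pos (by linarith) (by positivity)) (by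
      rw [div_le_iff₀ (by positivity)]
      linarith [(Nat.one_le_cast (α := ℝ)).2 hn])
  rw [hη] at hg
  refine ⟨G, hG, g, U, α * U, hU, mul_pos hα hU, (mul_comm _ _).le, fun ε δ => ?_⟩
  obtain ⟨hX, hX'⟩ := bilipschitz_of_abs_sub_le hU hD (fun ε δ => (hg ε δ).1) ε δ
  obtain ⟨hY, hY'⟩ := bilipschitz_of_abs_sub_le (g := G.F ∘ g) (mul_pos hα hU) hD
    (fun ε δ => (hg ε δ).2) ε δ
  exact ⟨hX, hX', hY, hY'⟩

lemma FactorsCube.le_aConst_mul_sq (hLip : ∀ G ∈ 𝓕, LipschitzWith L G.F) {c D : ℝ} {n : ℕ}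
    (hD : 0 < D) (hn : 0 < n) (h : FactorsCube 𝓕 c D n) : c ≤ aConst 𝓕 n * D ^ 2 := by
  obtain ⟨G, hG, f, a, b, ha, -, hab, hf⟩ := h
  have hanti (ε : Fin n → Bool) : hdist n ε (ε ∆ ⊤) = 1 := by
    have := natCast_mul_hdist ε (ε ∆ ⊤)
    rw [hammingDist_self_symmDiff, hammingWeight_top, Fintype.card_fin] at this
    exact (mul_eq_left₀ (by positivity)).1 this
  have hlower : b / D ≤ meanDisplacement (G.F ∘ f) ⊤ :=
    Finset.le_expect univ_nonempty fun ε _ => by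
      simpa only [Function.comp_apply, hanti, mul_one] using (hf ε (ε ∆ ⊤)).2.2.1
  have hlip : HammingLipschitz (a * D / n) f := fun ε δ =>
    (hf ε δ).2.1.trans_eq (by rw [← natCast_mul_hdist]; field_simp)
  have hupper := meanDisplacement_le_aConst hLip hG hlip ⊤
  rw [hammingWeight_top, Fintype.card_fin, div_mul_cancel₀ _ (by positivity)] at hupper
  have hb : b ≤ aConst 𝓕 n * (a * D) * D := (div_le_iff₀ hD).1 (hlower.trans hupper)
  exact le_of_mul_le_mul_left (by linarith) ha

lemma le_aConst_of_factorsCube (hLip : ∀ G ∈ 𝓕, LipschitzWith L G.F) {c : ℝ} {n : ℕ} (hn : 0 < n)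
    (h : ∀ D, 1 < D → FactorsCube 𝓕 c D n) : c ≤ aConst 𝓕 n := by
  have hcont : Tendsto (fun D : ℝ => aConst 𝓕 n * D ^ 2) (𝓝[>] 1) (𝓝 (aConst 𝓕 n)) := by
    refine tendsto_nhdsWithin_of_tendsto_nhds (Continuous.tendsto' ?_ _ _ ?_)
    · fun_prop
    · simp
  refine ge_of_tendsto hcont ?_
  filter_upwards [self_mem_nhdsWithin] with D hD
  exact (h D hD).le_aConst_mul_sq hLip (one_pos.trans hD) hn

end Embedding

/-- `(iii) ⇒ (i)` with sharp constants: if `limsup_n a_n(𝓕) > 0` then `𝓕` factors the Hamming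
cubes, and `c(𝓕) = lim_n a_n(𝓕)` (in particular the limit exists). -/
theorem factors_of_limsup_aConst_pos (𝓕 : Set MetricMap) (lam : ℝ) (hlam : 0 < lam)
    (hLip : ∀ G ∈ 𝓕, ∀ x y : G.X, dist (G.F x) (G.F y) ≤ lam * dist x y)
    (h : 0 < Filter.limsup (fun n : ℕ => aConst 𝓕 n) Filter.atTop) :
    FactorsHammingCubes 𝓕 ∧
    Filter.Tendsto (fun n : ℕ => aConst 𝓕 (n + 1)) Filter.atTop (nhds (cConst 𝓕)) := by
  have hLip' : ∀ G ∈ 𝓕, LipschitzWith ⟨lam, hlam.le⟩ G.F := fun G hG =>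
    LipschitzWith.of_dist_le_mul (hLip G hG)
  obtain ⟨α, hlim, hle⟩ := exists_tendsto_aConst hLip'
  have hα : 0 < α := hlim.limsup_eq ▸ h
  have hgreatest :
      IsGreatest {c | 0 < c ∧ ∀ D, 1 < D → ∀ n, 0 < n → FactorsCube 𝓕 c D n} α := by
    refine ⟨⟨hα, fun D hD n hn => factorsCube_of_tendsto_aConst hLip' hα hlim hle hD hn⟩, ?_⟩
    rintro c ⟨-, hc⟩
    refine ge_of_tendsto hlim ?_
    filter_upwards [eventually_gt_atTop 0] with n hn
    exact le_aConst_of_factorsCube hLip' hn fun D hD => hc D hD n hn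
  have hc : cConst 𝓕 = α := hgreatest.csSup_eq
  exact ⟨⟨α, hgreatest.1⟩, hc ▸ hlim.comp (tendsto_add_atTop_nat 1)⟩
end
end

section
/- Let F : ℓ₁ → ℓ₁ be the bounded linear diagonal operator defined by F((a_n)_{n≥1}) = (a_n/log(n+1))_{n≥1}, where log denotes the natural logarithm. Then for every n ∈ ℕ and every ε ∈ {−1,1}^n, ‖F(∑_{i=1}^n ε(i)e_i)‖_{ℓ₁} = ∑_{i=1}^n 1/log(i+1) ≥ n/log(n+1). Consequently, for every 1 < p < ∞ and every C > 0 there exists n ∈ ℕ such that (𝔼_ε ‖F(∑_{i=1}^n ε(i)e_i)‖_{ℓ₁}^p)^{1/p} > C·(∑_{i=1}^n ‖e_i‖_{ℓ₁}^p)^{1/p} = C·n^{1/p}, where 𝔼_ε denotes the average over all ε ∈ {−1,1}^n; i.e., F has no nontrivial Rademacher type. -/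
/-!
The images `F (e i)` are disjointly supported, so the `ℓ₁` norm of `F (∑ ε i • e i)` is the same
number `∑_{i<n} 1 / log (i + 2) ≥ n / log (n + 1)` for every choice of signs, and averaging over
the signs changes nothing. Type `p` would bound this number by a multiple of `n ^ (1/p)`, which is
impossible because `log (n + 1) = o(n ^ (1 - 1/p))`.
-/

open Finset

noncomputable section

/-- The Banach space `ℓ₁` of absolutely summable real sequences (indexed from `0`, so the
coordinate `i` plays the role of the paper's `a_{i+1}`). -/
abbrev ell1 : Type := lp (fun _ : ℕ => ℝ) 1

/-- The unit vector basis of `ℓ₁`; `e i` is the paper's `e_{i+1}`. -/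
def e (i : ℕ) : ell1 := lp.single 1 i (1 : ℝ)

section Growth

open Filter Asymptotics

lemma isLittleO_log_add_const_rpow_atTop (c : ℝ) {s : ℝ} (hs : 0 < s) :
    (fun x : ℝ => Real.log (x + c)) =o[atTop] fun x => x ^ s := by
  have hdiff : (fun x : ℝ => Real.log (x + c) - Real.log x) =o[atTop] fun x => x ^ s :=
    ((isLittleO_one_iff ℝ).mpr (Real.tendsto_log_comp_add_sub_log c)).trans
      (isLittleO_const_left.mpr <| .inr <|
        tendsto_norm_atTop_atTop.comp (tendsto_rpow_atTop hs))
  simpa using hdiff.add (isLittleO_log_rpow_atTop hs)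

lemma isLittleO_rpow_div_log_add_const_atTop (c : ℝ) {q : ℝ} (hq : q < 1) :
    (fun x : ℝ => x ^ q) =o[atTop] fun x => x / Real.log (x + c) := by
  have hlog : ∀ᶠ x : ℝ in atTop, Real.log (x + c) ≠ 0 :=
    (Real.tendsto_log_atTop.comp
      (tendsto_atTop_add_const_right _ c tendsto_id)).eventually_ne_atTop 0
  have hinv : (fun x : ℝ => (x ^ (1 - q))⁻¹) =o[atTop] fun x => (Real.log (x + c))⁻¹ :=
    (isLittleO_log_add_const_rpow_atTop c (sub_pos.mpr hq)).inv_rev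
      (hlog.mono fun _ hx h0 => absurd h0 hx)
  refine ((isBigO_refl (fun x : ℝ => x) atTop).mul_isLittleO hinv).congr' ?_ ?_
  · filter_upwards [eventually_gt_atTop 0] with x hx
    rw [← div_eq_mul_inv, div_eq_iff (by positivity), ← Real.rpow_add hx, add_sub_cancel,
      Real.rpow_one]
  · exact .of_eq (funext fun x => (div_eq_mul_inv x _).symm)

lemma eventually_const_mul_rpow_lt_div_log_add_one (C : ℝ) {q : ℝ} (hq : q < 1) :
    ∀ᶠ n : ℕ in atTop, C * (n : ℝ) ^ q < (n : ℝ) / Real.log ((n : ℝ) + 1) := by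
  have hlittle : (fun x : ℝ => C * x ^ q) =o[atTop] fun x => x / Real.log (x + 1) :=
    (isLittleO_rpow_div_log_add_const_atTop 1 hq).const_mul_left C
  refine tendsto_natCast_atTop_atTop.eventually
    (p := fun x : ℝ => C * x ^ q < x / Real.log (x + 1)) ?_
  filter_upwards [hlittle.def one_half_pos, eventually_gt_atTop 0] with x hx hx0
  have hpos : 0 < x / Real.log (x + 1) := div_pos hx0 (Real.log_pos (by linarith))
  rw [Real.norm_of_nonneg hpos.le] at hx
  linarith [Real.le_norm_self (C * x ^ q)]

end Growth

lemma div_log_add_one_le_sum_one_div_log (n : ℕ) :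
    (n : ℝ) / Real.log ((n : ℝ) + 1) ≤ ∑ i ∈ range n, 1 / Real.log ((i : ℝ) + 2) := by
  have hterm : ∀ i ∈ range n, 1 / Real.log ((n : ℝ) + 1) ≤ 1 / Real.log ((i : ℝ) + 2) := by
    intro i hi
    have hin : (i : ℝ) + 1 ≤ n := by exact_mod_cast mem_range.mp hi
    have hlog : 0 < Real.log ((i : ℝ) + 2) := Real.log_pos (by linarith [i.cast_nonneg (α := ℝ)])
    exact one_div_le_one_div_of_le hlog (Real.log_le_log (by positivity) (by linarith))
  simpa [div_eq_mul_inv] using card_nsmul_le_sum _ _ _ hterm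

lemma rpow_mean_rpow_of_forall_eq {Ω : Type*} [Fintype Ω] [Nonempty Ω] {f : Ω → ℝ} {c p : ℝ}
    (hf : ∀ ω, f ω = c) (hc : 0 ≤ c) (hp : p ≠ 0) :
    ((∑ ω, f ω ^ p) / Fintype.card Ω) ^ (1 / p) = c := by
  simp [hf, Real.rpow_rpow_inv hc hp]

lemma lp_norm_rpow_sum_single_of_injective {α ι E : Type*} [DecidableEq α] [Fintype ι]
    [NormedAddCommGroup E] {p : ENNReal} (hp : 0 < p.toReal) {j : ι → α}
    (hj : Function.Injective j) (c : ι → E) :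
    ‖∑ i, lp.single (E := fun _ : α => E) p (j i) (c i)‖ ^ p.toReal
      = ∑ i, ‖c i‖ ^ p.toReal := by
  simpa [hj.extend_apply] using
    lp.norm_sum_single (E := fun _ : α => E) hp (Function.extend j c 0) (univ.map ⟨j, hj⟩)

lemma norm_e (i : ℕ) : ‖e i‖ = 1 := by
  simp [e, lp.norm_single]

lemma norm_sum_smul_e {n : ℕ} (c : Fin n → ℝ) : ‖∑ i, c i • e (i : ℕ)‖ = ∑ i, |c i| := by
  simpa [e, ← lp.single_smul] using
    lp_norm_rpow_sum_single_of_injective (p := 1) (by simp) Fin.val_injective c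

lemma map_e_of_diagonal {F : ell1 → ell1} {w : ℕ → ℝ} (hF : ∀ x : ell1, ∀ i, F x i = w i * x i)
    (i : ℕ) : F (e i) = w i • e i := by
  ext k
  rcases eq_or_ne k i with rfl | hki
  · simp [hF]
  · simp [hF, e, hki]

section Diagonal

variable {𝓕 : Type*} [FunLike 𝓕 ell1 ell1] [LinearMapClass 𝓕 ℝ ell1 ell1] {F : 𝓕} {w : ℕ → ℝ}

lemma norm_map_sum_sign_smul_e (hF : ∀ i, F (e i) = w i • e i) {n : ℕ} (ε : Fin n → Bool) :
    ‖F (∑ i, (if ε i then (1 : ℝ) else -1) • e (i : ℕ))‖ = ∑ i ∈ range n, |w i| := by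
  have hsign : ∀ b : Bool, |if b then (1 : ℝ) else -1| = 1 := by simp
  simp only [map_sum, map_smul, hF, smul_smul, norm_sum_smul_e, abs_mul, hsign, one_mul,
    Fin.sum_univ_eq_sum_range fun i => |w i|]

lemma rademacher_mean_map_e (hF : ∀ i, F (e i) = w i • e i) {p : ℝ} (hp : p ≠ 0) (n : ℕ) :
    ((∑ ε : Fin n → Bool, ‖F (∑ i, (if ε i then (1 : ℝ) else -1) • e (i : ℕ))‖ ^ p) / 2 ^ n)
      ^ (1 / p) = ∑ i ∈ range n, |w i| := by
  simpa using rpow_mean_rpow_of_forall_eq (norm_map_sum_sign_smul_e hF (n := n))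
    (sum_nonneg fun i _ => abs_nonneg (w i)) hp

end Diagonal

/-- The diagonal operator `F(a_n)_{n≥1} = (a_n / log (n+1))_{n≥1}` on `ℓ₁` has no nontrivial
Rademacher type: its averaged Rademacher sums exceed any multiple of `n^{1/p}`. -/
theorem diagonal_operator_no_type
    (F : ell1 →L[ℝ] ell1)
    (hF : ∀ x : ell1, ∀ i : ℕ, (F x) i = x i / Real.log ((i : ℝ) + 2)) :
    (∀ n : ℕ, 0 < n → ∀ ε : Fin n → Bool,
      ‖F (∑ i : Fin n, (if ε i then (1 : ℝ) else -1) • e (i : ℕ))‖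
          = ∑ i ∈ Finset.range n, 1 / Real.log ((i : ℝ) + 2) ∧
      (n : ℝ) / Real.log ((n : ℝ) + 1)
          ≤ ∑ i ∈ Finset.range n, 1 / Real.log ((i : ℝ) + 2)) ∧
    ∀ p : ℝ, 1 < p → ∀ C : ℝ, 0 < C → ∃ n : ℕ, 0 < n ∧
      (∑ i : Fin n, ‖e (i : ℕ)‖ ^ p) ^ (1 / p) = (n : ℝ) ^ (1 / p) ∧
      C * (∑ i : Fin n, ‖e (i : ℕ)‖ ^ p) ^ (1 / p)
        < ((∑ ε : Fin n → Bool,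
              ‖F (∑ i : Fin n, (if ε i then (1 : ℝ) else -1) • e (i : ℕ))‖ ^ p) / 2 ^ n)
            ^ (1 / p) := by
  have hFe : ∀ i, F (e i) = (1 / Real.log ((i : ℝ) + 2)) • e i :=
    map_e_of_diagonal fun x i => (hF x i).trans (one_div_mul_eq_div _ _).symm
  have habs : ∀ i : ℕ, |1 / Real.log ((i : ℝ) + 2)| = 1 / Real.log ((i : ℝ) + 2) := fun i =>
    abs_of_nonneg (one_div_nonneg.mpr (Real.log_nonneg (by linarith [i.cast_nonneg (α := ℝ)])))
  refine ⟨fun n _ ε => ⟨?_, div_log_add_one_le_sum_one_div_log n⟩, fun p hp C _ => ?_⟩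
  · simpa only [habs] using norm_map_sum_sign_smul_e hFe ε
  · have hp0 : 0 < p := one_pos.trans hp
    obtain ⟨n, hlt, hn⟩ := ((eventually_const_mul_rpow_lt_div_log_add_one C
      ((div_lt_one hp0).mpr hp)).and (Filter.eventually_gt_atTop 0)).exists
    have hnorms : ∑ i : Fin n, ‖e (i : ℕ)‖ ^ p = n := by simp [norm_e]
    have hmean := rademacher_mean_map_e hFe hp0.ne' n
    simp only [habs] at hmean
    refine ⟨n, hn, by rw [hnorms], ?_⟩
    rw [hnorms]
    exact (hlt.trans_le (div_log_add_one_le_sum_one_div_log n)).trans_eq hmean.symm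
end
end
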